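/- Let α ≥ 1 and let d be the Carnot–Carathéodory distance on ℝ³ induced by X₁ and X₂. There exists a constant C > 0, depending only on α, such that for all x, y, z, z′ ∈ ℝ one has d( (x,y,z), (x,y,z′) ) ≤ C · min{ |z′ − z|^{1/(α+1)}, |z′ − z|^{1/2} / |x|^{(α−1)/2} }, with the convention that the minimum equals |z′ − z|^{1/(α+1)} when x = 0 and equals 0 when z = z′. -/

import Mathlib

open MeasureTheory

/-- The minimum appearing in the quasi-distance `δ`, with the conventions of the paper:
it equals `|ζ| ^ (1/(α+1))` when `x = 0` (and it is `0` when `ζ = 0`). -/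
noncomputable def ccMin (α x ζ : ℝ) : ℝ :=
  if x = 0 then |ζ| ^ (1 / (α + 1))
  else min (|ζ| ^ (1 / (α + 1))) (|ζ| ^ ((1 : ℝ) / 2) / |x| ^ ((α - 1) / 2))

/-- A horizontal curve on `[0,T]` for the vector fields `X₁ = ∂ₓ`, `X₂ = ∂_y + |x|^α ∂_z`:
a Lipschitz curve whose components have a.e. derivatives `(h₁, h₂, |x|^α h₂)` with
`h₁² + h₂² ≤ 1`. -/
def IsHorizontal (α T : ℝ) (γ : ℝ → ℝ × ℝ × ℝ) : Prop :=
  (∃ K, LipschitzOnWith K γ (Set.Icc 0 T)) ∧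
  ∃ h₁ h₂ : ℝ → ℝ, Measurable h₁ ∧ Measurable h₂ ∧
    (∀ t, (h₁ t) ^ 2 + (h₂ t) ^ 2 ≤ 1) ∧
    ∀ᵐ t ∂(volume.restrict (Set.Ioo 0 T)),
      HasDerivAt (fun s => (γ s).1) (h₁ t) t ∧
      HasDerivAt (fun s => (γ s).2.1) (h₂ t) t ∧
      HasDerivAt (fun s => (γ s).2.2) (|(γ t).1| ^ α * h₂ t) t

/-- The Carnot–Carathéodory distance associated with `X₁, X₂`. -/
noncomputable def ccDist (α : ℝ) (p q : ℝ × ℝ × ℝ) : ℝ :=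
  sInf {T : ℝ | 0 < T ∧ ∃ γ : ℝ → ℝ × ℝ × ℝ, IsHorizontal α T γ ∧ γ 0 = p ∧ γ T = q}

/-- The Carnot–Carathéodory ball. -/
def ccBall (α : ℝ) (p : ℝ × ℝ × ℝ) (r : ℝ) : Set (ℝ × ℝ × ℝ) :=
  {q | ccDist α p q < r}

/-- The algebraic quasi-distance `δ`. -/
noncomputable def deltaDist (α : ℝ) (p q : ℝ × ℝ × ℝ) : ℝ :=
  |q.1 - p.1| + |q.2.1 - p.2.1| +
    ccMin α p.1 (p.2.2 - q.2.2 + |p.1| ^ α * (q.2.1 - p.2.1))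

/-- The perimeter measure `μ = |x|^α ℒ²` on the plane `z = 0`, identified with `ℝ²`. -/
noncomputable def planeMeasure (α : ℝ) : Measure (ℝ × ℝ) :=
  volume.withDensity (fun u => ENNReal.ofReal (|u.1| ^ α))

/-!
Travelling from `x` to `x'` parallel to the `x`-axis, along `X₂` for a time `s`, back to `x`, and
along `-X₂` for a time `s` closes up in the `xy`-plane and raises `z` by `(|x'|^α - |x|^α) s`.
Moving away from the plane `x = 0` by `a`, and for a time at most `a` along `X₂`, therefore reaches
every height up to `a ((|x| + a)^α - |x|^α)` in time `4 a`. Since `α ≥ 1`, this is at least both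
`a^(α + 1)` and `a² |x|^(α - 1)`; each of the two terms of the minimum is the value of `a` at which
one of these lower bounds equals the height required.
-/

section Gluing

variable {E : Type*} {f g : ℝ → E} {a b c T t : ℝ}

theorem lipschitzOnWith_Icc_trans [PseudoMetricSpace E] {K : NNReal}
    (hab : LipschitzOnWith K f (Set.Icc a b)) (hbc : LipschitzOnWith K f (Set.Icc b c)) :
    LipschitzOnWith K f (Set.Icc a c) := by
  have h_ordered : ∀ s ∈ Set.Icc a c, ∀ t ∈ Set.Icc a c, s ≤ t →
      dist (f s) (f t) ≤ K * dist s t := by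
    rintro s ⟨has, -⟩ t ⟨-, htc⟩ hst
    rcases le_total t b with htb | hbt
    · exact hab.dist_le_mul s ⟨has, hst.trans htb⟩ t ⟨has.trans hst, htb⟩
    rcases le_total b s with hbs | hsb
    · exact hbc.dist_le_mul s ⟨hbs, hst.trans htc⟩ t ⟨hbt, htc⟩
    calc dist (f s) (f t) ≤ dist (f s) (f b) + dist (f b) (f t) := dist_triangle _ _ _
      _ ≤ K * dist s b + K * dist b t :=
          add_le_add (hab.dist_le_mul s ⟨has, hsb⟩ b ⟨has.trans hsb, le_rfl⟩)
            (hbc.dist_le_mul b ⟨le_rfl, hbt.trans htc⟩ t ⟨hbt, htc⟩)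
      _ = K * dist s t := by
          simp only [dist_comm _ b, dist_comm s t, Real.dist_eq, abs_of_nonneg (sub_nonneg.2 hsb),
            abs_of_nonpos (sub_nonpos.2 hbt), abs_of_nonneg (sub_nonneg.2 hst)]
          ring
  refine LipschitzOnWith.of_dist_le_mul fun s hs t ht => ?_
  rcases le_total s t with hst | hts
  · exact h_ordered s hs t ht hst
  · simpa only [dist_comm] using h_ordered t ht s hs hts

/-- The concatenation at time `T` of two functions of time, the second one restarted from its
time `0`. At `T` itself the first function prevails. -/
noncomputable def concatAt (T : ℝ) (f g : ℝ → E) (t : ℝ) : E :=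
  if t ≤ T then f t else g (t - T)

theorem concatAt_of_le (h : t ≤ T) : concatAt T f g t = f t :=
  if_pos h

theorem concatAt_of_lt (h : T < t) : concatAt T f g t = g (t - T) :=
  if_neg h.not_ge

theorem concatAt_of_ge (hfg : f T = g 0) (h : T ≤ t) : concatAt T f g t = g (t - T) := by
  rcases h.eq_or_lt with rfl | h
  · rw [concatAt_of_le le_rfl, sub_self, hfg]
  · exact concatAt_of_lt h

theorem measurable_concatAt [MeasurableSpace E] (hf : Measurable f) (hg : Measurable g) :
    Measurable (concatAt T f g) :=
  hf.ite measurableSet_Iic (hg.comp (measurable_id.sub_const T))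

theorem lipschitzOnWith_concatAt [PseudoMetricSpace E] {K L : NNReal} {S : ℝ}
    (hf : LipschitzOnWith K f (Set.Icc 0 T)) (hg : LipschitzOnWith L g (Set.Icc 0 S))
    (hfg : f T = g 0) :
    LipschitzOnWith (max K L) (concatAt T f g) (Set.Icc 0 (T + S)) := by
  refine lipschitzOnWith_Icc_trans (b := T) (LipschitzOnWith.of_dist_le_mul fun s hs t ht => ?_)
    (LipschitzOnWith.of_dist_le_mul fun s hs t ht => ?_)
  · rw [concatAt_of_le hs.2, concatAt_of_le ht.2]
    exact (hf.weaken (le_max_left K L)).dist_le_mul s hs t ht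
  · rw [concatAt_of_ge hfg hs.1, concatAt_of_ge hfg ht.1, ← dist_sub_right s t T]
    exact (hg.weaken (le_max_right K L)).dist_le_mul
      _ ⟨sub_nonneg.2 hs.1, sub_le_iff_le_add'.2 hs.2⟩
      _ ⟨sub_nonneg.2 ht.1, sub_le_iff_le_add'.2 ht.2⟩

variable [NormedAddCommGroup E] [NormedSpace ℝ E] {v : E}

theorem hasDerivAt_concatAt_of_lt (ht : t < T) (hf : HasDerivAt f v t) :
    HasDerivAt (concatAt T f g) v t :=
  hf.congr_of_eventuallyEq <| (eventually_lt_nhds ht).mono fun _ hs => concatAt_of_le hs.le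

theorem hasDerivAt_concatAt_of_gt (ht : T < t) (hg : HasDerivAt g v (t - T)) :
    HasDerivAt (concatAt T f g) v t :=
  (hg.comp_sub_const t T).congr_of_eventuallyEq <|
    (eventually_gt_nhds ht).mono fun _ hs => concatAt_of_lt hs

end Gluing

theorem hasDerivAt_prod_prod_iff {𝕜 E F G : Type*} [NontriviallyNormedField 𝕜]
    [NormedAddCommGroup E] [NormedSpace 𝕜 E] [NormedAddCommGroup F] [NormedSpace 𝕜 F]
    [NormedAddCommGroup G] [NormedSpace 𝕜 G] {f : 𝕜 → E × F × G} {u : E} {v : F} {w : G} {t : 𝕜} :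
    HasDerivAt f (u, v, w) t ↔
      HasDerivAt (fun s => (f s).1) u t ∧ HasDerivAt (fun s => (f s).2.1) v t ∧
        HasDerivAt (fun s => (f s).2.2) w t :=
  ⟨fun h => ⟨h.fst, h.snd.fst, h.snd.snd⟩, fun h => h.1.prodMk (h.2.1.prodMk h.2.2)⟩

/-- The value at `p` of the horizontal vector field `u X₁ + v X₂`. -/
noncomputable def horizontalVector (α : ℝ) (p : ℝ × ℝ × ℝ) (u v : ℝ) : ℝ × ℝ × ℝ :=
  (u, v, |p.1| ^ α * v)

/-- `q` can be reached from `p` by a horizontal curve in time exactly `T`. -/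
def HorizontallyJoined (α T : ℝ) (p q : ℝ × ℝ × ℝ) : Prop :=
  ∃ γ : ℝ → ℝ × ℝ × ℝ, IsHorizontal α T γ ∧ γ 0 = p ∧ γ T = q

section Horizontal

variable {α S T : ℝ} {γ γ' : ℝ → ℝ × ℝ × ℝ} {p q r : ℝ × ℝ × ℝ} {x x' y y' z z' : ℝ}

theorem isHorizontal_iff :
    IsHorizontal α T γ ↔ (∃ K, LipschitzOnWith K γ (Set.Icc 0 T)) ∧
      ∃ h₁ h₂ : ℝ → ℝ, Measurable h₁ ∧ Measurable h₂ ∧ (∀ t, h₁ t ^ 2 + h₂ t ^ 2 ≤ 1) ∧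
        ∀ᵐ t, t ∈ Set.Ioo 0 T → HasDerivAt γ (horizontalVector α (γ t) (h₁ t) (h₂ t)) t := by
  simp only [IsHorizontal, horizontalVector, hasDerivAt_prod_prod_iff,
    ae_restrict_iff' measurableSet_Ioo]

theorem IsHorizontal.concatAt (hγ : IsHorizontal α T γ) (hγ' : IsHorizontal α S γ')
    (h : γ T = γ' 0) : IsHorizontal α (T + S) (concatAt T γ γ') := by
  obtain ⟨⟨K, hK⟩, u, v, hu, hv, huv, hderiv⟩ := isHorizontal_iff.1 hγ
  obtain ⟨⟨K', hK'⟩, u', v', hu', hv', huv', hderiv'⟩ := isHorizontal_iff.1 hγ'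
  refine isHorizontal_iff.2 ⟨⟨_, lipschitzOnWith_concatAt hK hK' h⟩, _, _,
    measurable_concatAt (T := T) hu hu', measurable_concatAt (T := T) hv hv', fun t => ?_, ?_⟩
  · rcases le_or_gt t T with ht | ht
    · simpa only [concatAt_of_le ht] using huv t
    · simpa only [concatAt_of_lt ht] using huv' (t - T)
  · have hderiv'_shift := (measurePreserving_sub_right volume T).quasiMeasurePreserving.ae hderiv'
    filter_upwards [hderiv, hderiv'_shift, Measure.ae_ne volume T] with t hft hgt htT ht
    rcases htT.lt_or_gt with htT | htT
    · simp only [concatAt_of_le htT.le]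
      exact hasDerivAt_concatAt_of_lt htT (hft ⟨ht.1, htT⟩)
    · simp only [concatAt_of_lt htT]
      exact hasDerivAt_concatAt_of_gt htT
        (hgt ⟨sub_pos.2 htT, sub_lt_iff_lt_add'.2 ht.2⟩)

theorem HorizontallyJoined.trans (hT : 0 ≤ T) (hS : 0 ≤ S) (hpq : HorizontallyJoined α T p q)
    (hqr : HorizontallyJoined α S q r) : HorizontallyJoined α (T + S) p r := by
  obtain ⟨γ, hγ, rfl, hγT⟩ := hpq
  obtain ⟨γ', hγ', hγ'0, rfl⟩ := hqr
  have h : γ T = γ' 0 := hγT.trans hγ'0.symm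
  refine ⟨concatAt T γ γ', hγ.concatAt hγ' h, concatAt_of_le hT, ?_⟩
  rw [concatAt_of_ge h (le_add_of_nonneg_right hS), add_sub_cancel_left]

theorem horizontallyJoined_line {u v : ℝ} {w : ℝ × ℝ × ℝ} (huv : u ^ 2 + v ^ 2 ≤ 1)
    (hw : ∀ t : ℝ, horizontalVector α (p + t • w) u v = w) :
    HorizontallyJoined α T p (p + T • w) := by
  have hderiv : ∀ t : ℝ, HasDerivAt (fun s : ℝ => p + s • w) w t := fun t => by
    simpa only [id_eq, one_smul] using ((hasDerivAt_id t).smul_const w).const_add p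
  have hlip : LipschitzWith ‖w‖₊ fun s : ℝ => p + s • w :=
    lipschitzWith_of_nnnorm_deriv_le (fun t => (hderiv t).differentiableAt)
      fun t => by rw [(hderiv t).deriv]
  refine ⟨fun t => p + t • w, isHorizontal_iff.2 ⟨⟨_, hlip.lipschitzOnWith⟩, fun _ => u,
    fun _ => v, measurable_const, measurable_const, fun _ => huv, ae_of_all _ fun t _ => ?_⟩,
    by simp, rfl⟩
  rw [hw t]
  exact hderiv t

theorem exists_abs_le_one_mul_eq {d s : ℝ} (h : |d| ≤ s) : ∃ u : ℝ, |u| ≤ 1 ∧ s * u = d := by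
  refine ⟨d / s, ?_, mul_div_cancel_of_imp' fun hs => abs_nonpos_iff.1 (hs ▸ h)⟩
  rw [abs_div]
  exact div_le_one_of_le₀ (h.trans (le_abs_self s)) (abs_nonneg s)

theorem horizontallyJoined_of_abs_fst_sub_le (h : |x' - x| ≤ T) :
    HorizontallyJoined α T (x, y, z) (x', y, z) := by
  obtain ⟨u, hu, hTu⟩ := exists_abs_le_one_mul_eq h
  have hline := horizontallyJoined_line (α := α) (T := T) (p := (x, y, z)) (u := u) (v := 0)
    (w := (u, 0, 0)) (by simpa using hu) fun t => by simp [horizontalVector]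
  simpa [hTu] using hline

theorem horizontallyJoined_of_abs_snd_sub_le (h : |y' - y| ≤ T) :
    HorizontallyJoined α T (x, y, z) (x, y', z + |x| ^ α * (y' - y)) := by
  obtain ⟨v, hv, hTv⟩ := exists_abs_le_one_mul_eq h
  have hline := horizontallyJoined_line (α := α) (T := T) (p := (x, y, z)) (u := 0) (v := v)
    (w := (0, v, |x| ^ α * v)) (by simpa using hv) fun t => by simp [horizontalVector]
  simpa [mul_left_comm T, hTv] using hline

theorem horizontallyJoined_refl (hT : 0 ≤ T) : HorizontallyJoined α T p p :=
  horizontallyJoined_of_abs_fst_sub_le (by simpa using hT)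

theorem horizontallyJoined_loop (hx : |x' - x| ≤ S) (hy : |y' - y| ≤ T) :
    HorizontallyJoined α (S + T + S + T) (x, y, z)
      (x, y, z + (|x'| ^ α - |x| ^ α) * (y' - y)) := by
  have hS : 0 ≤ S := (abs_nonneg _).trans hx
  have hT : 0 ≤ T := (abs_nonneg _).trans hy
  have h_out : HorizontallyJoined α S (x, y, z) (x', y, z) :=
    horizontallyJoined_of_abs_fst_sub_le hx
  have h_up : HorizontallyJoined α T (x', y, z) (x', y', z + |x'| ^ α * (y' - y)) :=
    horizontallyJoined_of_abs_snd_sub_le hy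
  have h_back : HorizontallyJoined α S (x', y', z + |x'| ^ α * (y' - y))
      (x, y', z + |x'| ^ α * (y' - y)) :=
    horizontallyJoined_of_abs_fst_sub_le (abs_sub_comm x x' ▸ hx)
  have h_down : HorizontallyJoined α T (x, y', z + |x'| ^ α * (y' - y))
      (x, y, z + |x'| ^ α * (y' - y) + |x| ^ α * (y - y')) :=
    horizontallyJoined_of_abs_snd_sub_le (abs_sub_comm y y' ▸ hy)
  have h_loop := ((h_out.trans hS hT h_up).trans (by positivity) hS h_back).trans
    (by positivity) hT h_down
  convert h_loop using 3
  ring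

theorem ccDist_le_of_horizontallyJoined (hT : 0 ≤ T) (h : HorizontallyJoined α T p q) :
    ccDist α p q ≤ T := by
  refine le_of_forall_pos_le_add fun ε hε => csInf_le ⟨0, fun _ hT' => hT'.1.le⟩ ?_
  exact ⟨by positivity, h.trans hT hε.le (horizontallyJoined_refl hε.le)⟩

theorem ccDist_vertical_le_of_abs_sub_le_mul (hS : 0 ≤ S)
    (h : |z' - z| ≤ S * |(|x'| ^ α - |x| ^ α)|) :
    ccDist α (x, y, z) (x, y, z') ≤ 2 * (|x' - x| + S) := by
  obtain ⟨s, hs, hsz⟩ : ∃ s : ℝ, |s| ≤ S ∧ (|x'| ^ α - |x| ^ α) * s = z' - z := by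
    refine ⟨(z' - z) / (|x'| ^ α - |x| ^ α), ?_, mul_div_cancel_of_imp' fun h0 => ?_⟩
    · rw [abs_div]
      exact div_le_of_le_mul₀ (abs_nonneg _) hS h
    · rwa [h0, abs_zero, mul_zero, abs_nonpos_iff] at h
  have hjoined : HorizontallyJoined α (|x' - x| + S + |x' - x| + S) (x, y, z) (x, y, z') := by
    simpa [hsz] using horizontallyJoined_loop (α := α) (x := x) (x' := x') (z := z) le_rfl
      (show |y + s - y| ≤ S by rwa [add_sub_cancel_left])
  exact (ccDist_le_of_horizontallyJoined (by positivity) hjoined).trans_eq (by ring)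

theorem exists_abs_sub_eq_and_abs_eq_add {a : ℝ} (x : ℝ) (ha : 0 ≤ a) :
    ∃ x' : ℝ, |x' - x| = a ∧ |x'| = |x| + a := by
  rcases le_total 0 x with hx | hx
  · exact ⟨x + a, by rw [add_sub_cancel_left, abs_of_nonneg ha],
      by rw [abs_of_nonneg (add_nonneg hx ha), abs_of_nonneg hx]⟩
  · refine ⟨x - a, by rw [sub_sub_cancel_left, abs_neg, abs_of_nonneg ha], ?_⟩
    rw [abs_of_nonpos (by linarith), abs_of_nonpos hx]
    ring

theorem ccDist_vertical_le_four_mul {a : ℝ} (ha : 0 ≤ a)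
    (h : |z' - z| ≤ a * ((|x| + a) ^ α - |x| ^ α)) :
    ccDist α (x, y, z) (x, y, z') ≤ 4 * a := by
  obtain ⟨x', hx'x, hx'⟩ := exists_abs_sub_eq_and_abs_eq_add x ha
  calc ccDist α (x, y, z) (x, y, z') ≤ 2 * (|x' - x| + a) := by
        refine ccDist_vertical_le_of_abs_sub_le_mul ha (h.trans ?_)
        rw [hx']
        gcongr
        exact le_abs_self _
    _ = 4 * a := by rw [hx'x]; ring

end Horizontal

section PowerGap

variable {α β a r x ζ : ℝ}

theorem mul_rpow_sub_one_le_add_rpow_sub_rpow (hα : 1 ≤ α) (hr : 0 ≤ r) (ha : 0 ≤ a) :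
    a * r ^ (α - 1) ≤ (r + a) ^ α - r ^ α := by
  have rpow_eq : ∀ s : ℝ, 0 ≤ s → s ^ α = s ^ (α - 1) * s := fun s hs => by
    rw [← Real.rpow_add_one' hs (by linarith), sub_add_cancel]
  have hmono : r ^ (α - 1) ≤ (r + a) ^ (α - 1) :=
    Real.rpow_le_rpow hr (by linarith) (by linarith)
  rw [le_sub_iff_add_le']
  calc r ^ α + a * r ^ (α - 1) = r ^ (α - 1) * (r + a) := by rw [rpow_eq r hr]; ring
    _ ≤ (r + a) ^ (α - 1) * (r + a) := by gcongr
    _ = (r + a) ^ α := (rpow_eq (r + a) (by positivity)).symm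

theorem rpow_one_div_add_one_mul_rpow (hα : α + 1 ≠ 0) (hζ : 0 ≤ ζ) :
    ζ ^ (1 / (α + 1)) * (ζ ^ (1 / (α + 1))) ^ α = ζ := by
  rw [← Real.rpow_one_add' (by positivity) (by rwa [add_comm]), add_comm 1 α, one_div,
    Real.rpow_inv_rpow hζ hα]

theorem rpow_half_div_mul_self_mul_rpow (hζ : 0 ≤ ζ) (hr : 0 < r) :
    ζ ^ ((1 : ℝ) / 2) / r ^ (β / 2) *
      (ζ ^ ((1 : ℝ) / 2) / r ^ (β / 2) * r ^ β) = ζ := by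
  have hr_half : r ^ β = r ^ (β / 2) * r ^ (β / 2) := by
    rw [← Real.rpow_add hr, add_halves]
  have hζ_half : ζ ^ ((1 : ℝ) / 2) * ζ ^ ((1 : ℝ) / 2) = ζ := by
    rw [← Real.sqrt_eq_rpow, Real.mul_self_sqrt hζ]
  have hne : r ^ (β / 2) ≠ 0 := (Real.rpow_pos_of_pos hr _).ne'
  rw [hr_half, ← mul_assoc _ _ (r ^ (β / 2)), div_mul_cancel₀ _ hne, mul_left_comm,
    div_mul_cancel₀ _ hne, hζ_half]

theorem ccMin_nonneg : 0 ≤ ccMin α x ζ := by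
  unfold ccMin
  split_ifs <;> positivity

theorem abs_le_ccMin_mul_add_rpow_sub_rpow (hα : 1 ≤ α) :
    |ζ| ≤ ccMin α x ζ * ((|x| + ccMin α x ζ) ^ α - |x| ^ α) := by
  have h_first : |ζ| ≤ |ζ| ^ (1 / (α + 1)) *
      ((|x| + |ζ| ^ (1 / (α + 1))) ^ α - |x| ^ α) := by
    refine (rpow_one_div_add_one_mul_rpow (by linarith) (abs_nonneg ζ)).symm.trans_le ?_
    gcongr
    exact le_sub_iff_add_le'.2 (Real.add_rpow_le_rpow_add (abs_nonneg x) (by positivity) hα)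
  unfold ccMin
  split_ifs with hx
  · exact h_first
  rcases min_choice (|ζ| ^ (1 / (α + 1))) (|ζ| ^ ((1 : ℝ) / 2) / |x| ^ ((α - 1) / 2))
    with hmin | hmin <;> rw [hmin]
  · exact h_first
  · refine (rpow_half_div_mul_self_mul_rpow (β := α - 1) (abs_nonneg ζ)
      (abs_pos.2 hx)).symm.trans_le ?_
    gcongr
    exact mul_rpow_sub_one_le_add_rpow_sub_rpow hα (abs_nonneg x) (by positivity)

end PowerGap

/-- Vertical estimate for the CC distance: points lying one above the other are at
distance at most `C · min{|z' - z|^{1/(α+1)}, |z' - z|^{1/2}/|x|^{(α-1)/2}}`. -/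
theorem ccDist_vertical (α : ℝ) (hα : 1 ≤ α) :
    ∃ C : ℝ, 0 < C ∧ ∀ x y z z' : ℝ,
      ccDist α (x, y, z) (x, y, z') ≤ C * ccMin α x (z' - z) :=
  ⟨4, four_pos, fun _ _ _ _ =>
    ccDist_vertical_le_four_mul ccMin_nonneg (abs_le_ccMin_mul_add_rpow_sub_rpow hα)⟩
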